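/- arXiv:2205.03839 — 2 statements merged into one kernel-verified Lean document; each statement's English description precedes it below -/
import Mathlib

section
/- Fix ω₀ > 0. For each integer n ≥ 1 let G^n_{ω₀}(x, y) = Σ_{j=0}^n ψ_j(x) ψ_j(y)/(λ_j + ω₀²), where ψ_j(x) = ((2 − δ_{0,j})/(n+1))^{1/2} cos(π j (2x+1)/(2(n+1))) and λ_j = 4 sin²(π j/(2(n+1))). Then there exist a constant C > 0 and, for each n, a function H̃^{(n)} : {0,…,n} → ℝ such that for all n ≥ 1 and all y ∈ {0,…,n}: |G^n_{ω₀}(y, y) − G_{ω₀}(0) − H̃^{(n)}(y)| ≤ C/n and |H̃^{(n)}(y)| ≤ C/χ_n(y)², where G_{ω₀}(0) = 1/(ω₀ √(ω₀² + 4)). -/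
/-!
Write `N = n + 1`, `θ_j = π j / N`, and let `r ∈ (0, 1)` be the root of `r + 1/r = 2 + ω₀²`.
Since `cos² = (1 + cos (2 ·)) / 2` and `λ_j = 2 - 2 cos θ_j`, folding the sum over `j` gives
`G^n(y, y) = (1 / 2N) ∑_{j < 2N} (1 + cos ((2y+1) θ_j)) / (2 + ω₀² - 2 cos θ_j)`, the summand being
invariant under `j ↦ 2N - j` and zero at `j = N`.

The denominator is expanded by a truncated Poisson kernel (`poisson_trunc`), which is exact because
`cos (2N θ_j) = 1` and `sin (2N θ_j) = 0`. Orthogonality of characters (`sum_cos_eq`) then keeps only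
the frequencies `k = 0`, `k = 2y+1` and `k = 2N - 2y - 1`, and yields the method-of-images formula
`G^n(y, y) = c (1 + r^{2N} + r^{2y+1} + r^{2N-2y-1}) / (1 - r^{2N})`, with `c = G_{ω₀}(0)`.
The function `H` collects the last two powers; what remains is `2 c r^{2N} / (1 - r^{2N})`.
Both are controlled by the boundedness of `k² r^k`.
-/

open Real

noncomputable section

/-- The `(n+1)`-periodic weight `χ_n : ℤ → ℝ`, defined on the representative
`x̄ = x mod (n+1) ∈ {0,…,n}` by `χ_n(x̄) = min(1 + x̄, n + 2 − x̄)`. -/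
def chiN (n : ℕ) (x : ℤ) : ℝ :=
  min ((1 : ℝ) + ((x % ((n : ℤ) + 1) : ℤ) : ℝ)) ((n : ℝ) + 2 - ((x % ((n : ℤ) + 1) : ℤ) : ℝ))

/-- The Neumann eigenvectors `ψ_j(x) = ((2 − δ_{0,j})/(n+1))^{1/2} cos(πj(2x+1)/(2(n+1)))`. -/
def psiN (n j x : ℕ) : ℝ :=
  Real.sqrt ((2 - if j = 0 then 1 else 0) / (n + 1)) *
    Real.cos (π * j * (2 * x + 1) / (2 * (n + 1)))

/-- The Green's function `G^n_{ω₀}(x,y) = Σ_j ψ_j(x)ψ_j(y)/(λ_j + ω₀²)` of `ω₀² − Δ_N`,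
where `λ_j = 4 sin²(πj/(2(n+1)))`. -/
def greenN (n : ℕ) (ω₀ : ℝ) (x y : ℕ) : ℝ :=
  ∑ j ∈ Finset.range (n + 1),
    psiN n j x * psiN n j y / (4 * Real.sin (π * j / (2 * (n + 1))) ^ 2 + ω₀ ^ 2)

/-! ### Averages of cosines and the truncated Poisson kernel -/

/-- Orthogonality of the characters of `ℤ / Mℤ`, real part. -/
lemma sum_cos_eq (M : ℕ) (hM : 0 < M) (m : ℤ) :
    ∑ j ∈ Finset.range M, Real.cos (m * (2 * π * j / M)) = if (M : ℤ) ∣ m then (M : ℝ) else 0 := by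
  have hM' : (M : ℝ) ≠ 0 := by positivity
  have hMc : (M : ℂ) ≠ 0 := by exact_mod_cast hM.ne'
  split_ifs with h
  · obtain ⟨q, rfl⟩ := h
    have : ∀ j ∈ Finset.range M,
        Real.cos (((M * q : ℤ) : ℝ) * (2 * π * j / M)) = 1 := by
      intro j _
      have e : ((M * q : ℤ) : ℝ) * (2 * π * j / M) = ((q * j : ℤ) : ℝ) * (2 * π) := by
        push_cast; field_simp
      rw [e, Real.cos_int_mul_two_pi]
    rw [Finset.sum_congr rfl this]; simp
  · set w : ℂ := Complex.exp (m * (2 * π * Complex.I / M)) with hw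
    have hw1 : w ≠ 1 := by
      intro h1
      rw [hw, Complex.exp_eq_one_iff] at h1
      obtain ⟨q, hq⟩ := h1
      apply h
      refine ⟨q, ?_⟩
      have : (m : ℂ) = M * q := by
        field_simp at hq
        exact hq
      exact_mod_cast this
    have hwM : w ^ M = 1 := by
      rw [hw, ← Complex.exp_nat_mul, Complex.exp_eq_one_iff]
      exact ⟨m, by field_simp⟩
    have hs : ∑ j ∈ Finset.range M, w ^ j = 0 := by
      rw [geom_sum_eq hw1, hwM]; simp
    have := congrArg Complex.re hs
    rw [Complex.re_sum, Complex.zero_re] at this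
    rw [← this]
    refine Finset.sum_congr rfl fun j _ => ?_
    rw [hw, ← Complex.exp_nat_mul]
    have e : (j : ℂ) * (m * (2 * π * Complex.I / M))
        = ((m * (2 * π * j / M) : ℝ) : ℂ) * Complex.I := by
      push_cast; ring
    rw [e, Complex.exp_ofReal_mul_I_re]

lemma sum_pow_cos (r θ : ℝ) (M : ℕ) :
    (∑ k ∈ Finset.range M, r ^ k * Real.cos (k * θ)) * (1 - 2 * r * Real.cos θ + r ^ 2)
      = 1 - r * Real.cos θ - r ^ M * Real.cos (M * θ)
        + r ^ (M + 1) * (Real.cos (M * θ) * Real.cos θ + Real.sin (M * θ) * Real.sin θ) := by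
  induction M with
  | zero => simp
  | succ M ih =>
    rw [Finset.sum_range_succ, add_mul, ih]
    have e : ((M + 1 : ℕ) : ℝ) * θ = M * θ + θ := by push_cast; ring
    rw [e, Real.cos_add, Real.sin_add]
    have := Real.sin_sq_add_cos_sq θ
    linear_combination (-(r ^ (M + 2) * Real.cos (M * θ))) * this

/-- At an `M`-th root of unity the Poisson kernel is an exact finite cosine sum. -/
lemma poisson_trunc (r θ : ℝ) (M : ℕ) (hc : Real.cos (M * θ) = 1) (hs : Real.sin (M * θ) = 0) :
    (2 * ∑ k ∈ Finset.range M, r ^ k * Real.cos (k * θ)) * (1 - 2 * r * Real.cos θ + r ^ 2)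
      = (1 - r ^ M) * ((1 - r ^ 2) + (1 - 2 * r * Real.cos θ + r ^ 2)) := by
  have := sum_pow_cos r θ M
  rw [hc, hs] at this
  linear_combination 2 * this

/-- The image sum: only the frequencies `0`, `m` and `M - m` survive averaging. -/
lemma sum_poisson (r : ℝ) (hr0 : 0 < r) (hr1 : r < 1) (M m : ℕ) (hm : 0 < m) (hmM : m < M) :
    ∑ j ∈ Finset.range M, (1 + Real.cos (m * (2 * π * j / M))) *
        ((1 - r ^ 2) / (1 - 2 * r * Real.cos (2 * π * j / M) + r ^ 2))
      = M * ((1 + r ^ M + r ^ m + r ^ (M - m)) / (1 - r ^ M)) := by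
  have hM : 0 < M := by omega
  have hM' : (M : ℝ) ≠ 0 := by positivity
  have hrM : 0 < 1 - r ^ M := by
    have := pow_lt_one₀ hr0.le hr1 hM.ne'
    linarith
  have hP : ∀ j : ℕ, (1 - r ^ 2) / (1 - 2 * r * Real.cos (2 * π * j / M) + r ^ 2)
      = (2 * ∑ k ∈ Finset.range M, r ^ k * Real.cos (k * (2 * π * j / M))) / (1 - r ^ M) - 1 := by
    intro j
    have hD : 0 < 1 - 2 * r * Real.cos (2 * π * j / M) + r ^ 2 := by
      nlinarith [Real.cos_le_one (2 * π * j / M), sq_nonneg (1 - r),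
        mul_pos (sub_pos.2 hr1) (sub_pos.2 hr1)]
    have e : (M : ℝ) * (2 * π * j / M) = (j : ℝ) * (2 * π) := by field_simp
    have e2 : (j : ℝ) * (2 * π) = ((2 * j : ℕ) : ℝ) * π := by push_cast; ring
    have := poisson_trunc r (2 * π * j / M) M (by rw [e, Real.cos_nat_mul_two_pi])
      (by rw [e, e2, Real.sin_nat_mul_pi])
    rw [div_eq_iff hD.ne', sub_mul, div_mul_eq_mul_div, this]
    field_simp
    ring
  have hS : ∑ j ∈ Finset.range M, (1 + Real.cos (m * (2 * π * j / M))) *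
      (2 * ∑ k ∈ Finset.range M, r ^ k * Real.cos (k * (2 * π * j / M)))
      = M * (2 + r ^ m + r ^ (M - m)) := by
    have h1 : ∀ j ∈ Finset.range M, (1 + Real.cos (m * (2 * π * j / M))) *
      (2 * ∑ k ∈ Finset.range M, r ^ k * Real.cos (k * (2 * π * j / M)))
      = ∑ k ∈ Finset.range M, r ^ k * (2 * Real.cos ((k : ℤ) * (2 * π * j / M))
        + Real.cos (((k + m : ℤ) : ℝ) * (2 * π * j / M))
        + Real.cos (((k - m : ℤ) : ℝ) * (2 * π * j / M))) := by
      intro j _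
      rw [Finset.mul_sum, Finset.mul_sum]
      refine Finset.sum_congr rfl fun k _ => ?_
      push_cast
      rw [add_mul (k : ℝ), sub_mul, Real.cos_add, Real.cos_sub]
      ring
    rw [Finset.sum_congr rfl h1, Finset.sum_comm]
    have h2 : ∀ k ∈ Finset.range M, ∑ j ∈ Finset.range M,
        r ^ k * (2 * Real.cos ((k : ℤ) * (2 * π * j / M))
        + Real.cos (((k + m : ℤ) : ℝ) * (2 * π * j / M))
        + Real.cos (((k - m : ℤ) : ℝ) * (2 * π * j / M)))
        = (if k = 0 then 2 * M * r ^ k else 0) + (if k = M - m then M * r ^ k else 0)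
          + (if k = m then M * r ^ k else 0) := by
      intro k hk
      have hk' := Finset.mem_range.1 hk
      rw [← Finset.mul_sum, Finset.sum_add_distrib, Finset.sum_add_distrib, ← Finset.mul_sum,
        sum_cos_eq M hM, sum_cos_eq M hM, sum_cos_eq M hM]
      have d0 : ((M : ℤ) ∣ (k : ℤ)) ↔ k = 0 := by
        constructor
        · intro h
          exact Nat.eq_zero_of_dvd_of_lt (by exact_mod_cast h) hk'
        · rintro rfl; simp
      have d1 : ((M : ℤ) ∣ (k + m : ℤ)) ↔ k = M - m := by
        constructor
        · rintro ⟨q, hq⟩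
          have : q = 1 := by
            have h1 : 0 < q := by
              by_contra hh
              nlinarith
            have h2 : q < 2 := by
              by_contra hh
              nlinarith
            omega
          subst this
          omega
        · rintro rfl
          exact ⟨1, by omega⟩
      have d2 : ((M : ℤ) ∣ (k - m : ℤ)) ↔ k = m := by
        constructor
        · intro h
          have := Int.eq_zero_of_abs_lt_dvd h (by rw [abs_lt]; constructor <;> omega)
          omega
        · rintro rfl; simp
      simp only [d0, d1, d2]
      split_ifs <;> ring
    rw [Finset.sum_congr rfl h2, Finset.sum_add_distrib, Finset.sum_add_distrib,
      Finset.sum_ite_eq', Finset.sum_ite_eq', Finset.sum_ite_eq',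
      if_pos (Finset.mem_range.2 hM), if_pos (Finset.mem_range.2 (by omega)),
      if_pos (Finset.mem_range.2 hmM)]
    ring
  have hT : ∑ j ∈ Finset.range M, (1 + Real.cos (m * (2 * π * j / M))) = M := by
    have hm' : ¬ (M : ℤ) ∣ (m : ℤ) := by
      intro h
      have := Nat.le_of_dvd hm (by exact_mod_cast h)
      omega
    have := sum_cos_eq M hM m
    rw [if_neg hm'] at this
    push_cast at this
    rw [Finset.sum_add_distrib, this]; simp
  simp only [hP, mul_sub, mul_one]
  simp only [← mul_div_assoc (1 + Real.cos _)]
  rw [Finset.sum_sub_distrib, hT, ← Finset.sum_div, hS]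
  field_simp
  ring

/-! ### The method of images for the Neumann Green's function -/

/-- A function on `{0, …, 2N}` symmetric about `N` and vanishing there is summed by folding. -/
lemma sum_fold (F : ℕ → ℝ) (N : ℕ) (hsymm : ∀ j < N, F (N + (N - 1 - j)) = F (j + 1))
    (hN : F N = 0) :
    ∑ j ∈ Finset.range (2 * N), F j
      = ∑ j ∈ Finset.range N, (2 - if j = 0 then 1 else 0) * F j := by
  have h1 : ∑ j ∈ Finset.range N, F (N + j) = ∑ j ∈ Finset.range N, F (j + 1) := by
    rw [← Finset.sum_range_reflect (fun j => F (N + j))]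
    exact Finset.sum_congr rfl fun j hj => hsymm j (Finset.mem_range.1 hj)
  have h2 := Finset.sum_range_succ F N
  rw [Finset.sum_range_succ', hN] at h2
  rw [two_mul, Finset.sum_range_add, h1]
  simp only [sub_mul, Finset.sum_sub_distrib, ← Finset.mul_sum, ite_mul, one_mul, zero_mul,
    Finset.sum_ite_eq', Finset.mem_range]
  rcases Nat.eq_zero_or_pos N with h0 | h0
  · subst h0; simp
  · rw [if_pos h0]; linarith

/-- The method-of-images formula on the diagonal. -/
lemma greenN_diag (ω₀ r : ℝ) (hr0 : 0 < r) (hr1 : r < 1) (hr : r * (2 + ω₀ ^ 2) = 1 + r ^ 2)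
    (n y : ℕ) (hy : y ≤ n) :
    greenN n ω₀ y y = r / (1 - r ^ 2) *
      ((1 + r ^ (2 * (n + 1)) + r ^ (2 * y + 1) + r ^ (2 * (n + 1) - (2 * y + 1)))
        / (1 - r ^ (2 * (n + 1)))) := by
  have hN : (n : ℝ) + 1 ≠ 0 := by positivity
  have hr2 : 0 < 1 - r ^ 2 := by nlinarith
  have key := sum_poisson r hr0 hr1 (2 * (n + 1)) (2 * y + 1) (by omega) (by omega)
  have ang : ∀ j : ℕ, 2 * π * j / ((2 * (n + 1) : ℕ) : ℝ) = π * j / (n + 1) := by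
    intro j; push_cast; field_simp
  simp only [ang] at key
  rw [sum_fold _ (n + 1) ?_ ?_] at key
  · have : greenN n ω₀ y y = r / (1 - r ^ 2) / ((2 * (n + 1) : ℕ) : ℝ) *
        (((2 * (n + 1) : ℕ) : ℝ) * ((1 + r ^ (2 * (n + 1)) + r ^ (2 * y + 1)
          + r ^ (2 * (n + 1) - (2 * y + 1))) / (1 - r ^ (2 * (n + 1))))) := by
      rw [← key, greenN, Finset.mul_sum]
      refine Finset.sum_congr rfl fun j _ => ?_
      set θ : ℝ := π * j / (n + 1) with hθ
      have hw : (0 : ℝ) ≤ (2 - if j = 0 then 1 else 0) / (n + 1) := by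
        apply div_nonneg _ (by positivity)
        split_ifs <;> norm_num
      have ea : π * j * (2 * y + 1) / (2 * ((n : ℝ) + 1)) = (((2 * y + 1 : ℕ) : ℝ) * θ) / 2 := by
        rw [hθ]; push_cast; field_simp
      have eb : π * j / (2 * ((n : ℝ) + 1)) = θ / 2 := by
        rw [hθ]; field_simp
      have es : 4 * Real.sin (θ / 2) ^ 2 = 2 - 2 * Real.cos θ := by
        have h := Real.cos_sq (θ / 2)
        have h' := Real.sin_sq_add_cos_sq (θ / 2)
        rw [mul_div_cancel₀ _ (two_ne_zero)] at h
        linarith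
      have ec : Real.cos ((((2 * y + 1 : ℕ) : ℝ) * θ) / 2) ^ 2
          = (1 + Real.cos (((2 * y + 1 : ℕ) : ℝ) * θ)) / 2 := by
        rw [Real.cos_sq, mul_div_cancel₀ _ (two_ne_zero)]; ring
      have hD : 0 < 1 - 2 * r * Real.cos θ + r ^ 2 := by
        nlinarith [Real.cos_le_one θ, mul_pos (sub_pos.2 hr1) (sub_pos.2 hr1)]
      have eD : 2 - 2 * Real.cos θ + ω₀ ^ 2 = (1 - 2 * r * Real.cos θ + r ^ 2) / r := by
        field_simp; linarith
      unfold psiN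
      rw [ea, eb, es, eD, mul_mul_mul_comm, Real.mul_self_sqrt hw, ← sq, ec]
      generalize (if j = 0 then (1 : ℝ) else 0) = δ
      generalize Real.cos (((2 * y + 1 : ℕ) : ℝ) * θ) = X
      push_cast
      field_simp
    rw [this]
    have : ((2 * (n + 1) : ℕ) : ℝ) ≠ 0 := by positivity
    rw [← mul_assoc, div_mul_cancel₀ _ this]
  · intro j hj
    have e : π * ((n + 1 + (n + 1 - 1 - j) : ℕ) : ℝ) / ((n : ℝ) + 1)
        = 2 * π - π * ((j + 1 : ℕ) : ℝ) / (n + 1) := by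
      have : ((n + 1 + (n + 1 - 1 - j) : ℕ) : ℝ) = 2 * (n + 1) - (j + 1) := by
        rw [eq_sub_iff_add_eq]; norm_cast; omega
      rw [this]; push_cast; field_simp
    rw [e, mul_sub, Real.cos_nat_mul_two_pi_sub, Real.cos_two_pi_sub]
  · have e : π * ((n + 1 : ℕ) : ℝ) / ((n : ℝ) + 1) = π := by push_cast; field_simp
    have : Real.cos (((2 * y + 1 : ℕ) : ℝ) * π) = -1 := by
      rw [Real.cos_nat_mul_pi]; simp [pow_succ, pow_mul]
    rw [e, this]; simp

/-! ### Decay estimates -/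

lemma exists_sq_mul_pow_le (r : ℝ) (hr0 : 0 < r) (hr1 : r < 1) :
    ∃ B > 0, ∀ k : ℕ, (k : ℝ) ^ 2 * r ^ k ≤ B := by
  have h := (tendsto_pow_const_mul_const_pow_of_abs_lt_one 2
    (by rw [abs_of_pos hr0]; exact hr1)).bddAbove_range
  obtain ⟨B, hB⟩ := h
  refine ⟨max B 1, by positivity, fun k => le_trans (hB ⟨k, rfl⟩) (le_max_left _ _)⟩

/-- Along the diagonal, `G^n_{ω₀}(y,y)` approximates the infinite-volume value
`G_{ω₀}(0) = 1/(ω₀ √(ω₀² + 4))` up to an error `H̃^{(n)}(y)` of size `O(χ_n(y)^{−2})`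
plus a uniform `O(1/n)` correction. -/
theorem greenN_diagonal_approx (ω₀ : ℝ) (hω : 0 < ω₀) :
    ∃ C > 0, ∀ n : ℕ, 1 ≤ n → ∃ H : ℕ → ℝ,
      ∀ y ≤ n,
        |greenN n ω₀ y y - 1 / (ω₀ * Real.sqrt (ω₀ ^ 2 + 4)) - H y| ≤ C / n
        ∧ |H y| ≤ C / chiN n (y : ℤ) ^ 2 := by
  set s : ℝ := ω₀ * Real.sqrt (ω₀ ^ 2 + 4) with hs
  have hs0 : 0 < s := by positivity
  have hs2 : s ^ 2 = ω₀ ^ 2 * (ω₀ ^ 2 + 4) := by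
    rw [hs, mul_pow, Real.sq_sqrt (by positivity)]
  -- The smaller root of `r ^ 2 - (2 + ω₀ ^ 2) * r + 1 = 0`.
  obtain ⟨r, hrdef⟩ : ∃ r, r = (2 + ω₀ ^ 2 - s) / 2 := ⟨_, rfl⟩
  have hω2 : 0 < ω₀ ^ 2 := by positivity
  have hr0 : 0 < r := by
    have : s < 2 + ω₀ ^ 2 := by nlinarith
    rw [hrdef]; linarith
  have hr1 : r < 1 := by
    have : ω₀ ^ 2 < s := by nlinarith
    rw [hrdef]; linarith
  have hr : r * (2 + ω₀ ^ 2) = 1 + r ^ 2 := by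
    rw [hrdef]; linear_combination (-1 / 4 : ℝ) * hs2
  have hr2 : 0 < 1 - r ^ 2 := by nlinarith
  have hc : r / (1 - r ^ 2) = 1 / s := by
    have : s = 2 + ω₀ ^ 2 - 2 * r := by rw [hrdef]; ring
    rw [div_eq_div_iff hr2.ne' hs0.ne', this]
    linear_combination -hr + 2 * hr
  obtain ⟨B, hB0, hB⟩ := exists_sq_mul_pow_le r hr0 hr1
  obtain ⟨A, hA⟩ : ∃ A, A = 1 / s / (1 - r ^ 2) := ⟨_, rfl⟩
  have hA0 : 0 < A := by rw [hA]; positivity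
  refine ⟨8 * A * B, by positivity, fun n hn => ?_⟩
  have hpow : r ^ (2 * (n + 1)) ≤ r ^ 2 := pow_le_pow_of_le_one hr0.le hr1.le (by omega)
  have hd : 0 < 1 - r ^ (2 * (n + 1)) := by linarith
  -- Uniformly in `n`, the image-sum prefactor is at most `A`.
  have hAn : 1 / s / (1 - r ^ (2 * (n + 1))) ≤ A := by
    rw [hA]
    apply div_le_div_of_nonneg_left (by positivity) hr2 (by linarith)
  have hAn0 : 0 < 1 / s / (1 - r ^ (2 * (n + 1))) := by positivity
  refine ⟨fun y => 1 / s / (1 - r ^ (2 * (n + 1))) *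
    (r ^ (2 * y + 1) + r ^ (2 * (n + 1) - (2 * y + 1))), fun y hy => ⟨?_, ?_⟩⟩
  · have e : greenN n ω₀ y y - 1 / s - 1 / s / (1 - r ^ (2 * (n + 1))) *
        (r ^ (2 * y + 1) + r ^ (2 * (n + 1) - (2 * y + 1)))
        = 1 / s / (1 - r ^ (2 * (n + 1))) * (2 * r ^ (2 * (n + 1))) := by
      rw [greenN_diag ω₀ r hr0 hr1 hr n y hy, hc]
      field_simp
      ring
    have hn' : (1 : ℝ) ≤ n := by exact_mod_cast hn
    have hb : r ^ (2 * (n + 1)) * n ≤ B := by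
      refine le_trans ?_ (hB (2 * (n + 1)))
      rw [mul_comm]
      apply mul_le_mul_of_nonneg_right _ (by positivity)
      push_cast; nlinarith
    beta_reduce
    rw [e, abs_of_pos (by positivity), le_div_iff₀ (by positivity)]
    calc _ = 1 / s / (1 - r ^ (2 * (n + 1))) * (2 * (r ^ (2 * (n + 1)) * n)) := by ring
      _ ≤ A * (2 * B) := by gcongr
      _ ≤ 8 * A * B := by nlinarith [mul_pos hA0 hB0]
  · have hy' : (y : ℝ) ≤ n := by exact_mod_cast hy
    have hy0 : (0 : ℝ) ≤ y := by positivity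
    have hmod : ((y : ℤ) % ((n : ℤ) + 1)) = y := Int.emod_eq_of_lt (by omega) (by omega)
    have hchi : chiN n (y : ℤ) = min (1 + (y : ℝ)) (n + 2 - y) := by
      simp [chiN, hmod]
    obtain ⟨χ, hχ⟩ : ∃ χ, χ = chiN n (y : ℤ) := ⟨_, rfl⟩
    have hχ0 : 0 < χ := by
      rw [hχ, hchi]; apply lt_min <;> linarith
    have hχ1 : χ ≤ 1 + y := by rw [hχ, hchi]; exact min_le_left _ _
    have hχ2 : χ ≤ n + 2 - y := by rw [hχ, hchi]; exact min_le_right _ _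
    -- Both exponents are at least `χ / 2`.
    have hgen : ∀ k : ℕ, χ ≤ 2 * k → r ^ k * χ ^ 2 ≤ 4 * B := by
      intro k hk
      have h1 : χ ^ 2 ≤ 4 * (k : ℝ) ^ 2 := by nlinarith
      calc r ^ k * χ ^ 2 ≤ r ^ k * (4 * (k : ℝ) ^ 2) := by gcongr
        _ = 4 * ((k : ℝ) ^ 2 * r ^ k) := by ring
        _ ≤ 4 * B := by gcongr; exact hB k
    have h1 := hgen (2 * y + 1) (by push_cast; linarith)
    have h2 := hgen (2 * (n + 1) - (2 * y + 1)) (by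
      rw [Nat.cast_sub (by omega)]; push_cast; linarith)
    beta_reduce
    rw [← hχ, abs_of_pos (by positivity), le_div_iff₀ (by positivity)]
    calc _ = 1 / s / (1 - r ^ (2 * (n + 1))) *
          (r ^ (2 * y + 1) * χ ^ 2 + r ^ (2 * (n + 1) - (2 * y + 1)) * χ ^ 2) := by ring
      _ ≤ A * (4 * B + 4 * B) := by gcongr
      _ = 8 * A * B := by ring

end
end

section
/- Fix ω₀ > 0 and γ > 0, and for an integer n ≥ 1 define M_{x,y} = Σ_{j,j'=0}^n Θ(μ_j, μ_{j'}) ψ_j(x) ψ_{j'}(x) ψ_j(y) ψ_{j'}(y), where Θ(c, c') = [1 + (c − c')²/(8γ²(c + c'))]^{−1}, μ_j = ω₀² + 4 sin²(π j/(2(n+1))), and ψ_j(x) = ((2 − δ_{0,j})/(n+1))^{1/2} cos(π j (2x+1)/(2(n+1))). Then the matrix [M_{x,y}] is symmetric, doubly stochastic (Σ_{y=0}^n M_{x,y} = 1 for every x), and all its entries are strictly positive: M_{x,y} > 0 for all x, y ∈ {0,…,n}. -/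
/-!
Symmetry is visible in the definition, and the row sums are `1` because the `ψ_j` are orthonormal
(`psiN_orthonormal`, hence complete, `psiN_complete`) and `Θ(c, c) = 1`.

For positivity, `M_{x,y}` is the value of the quadratic form `[Θ(μ_j, μ_k)]` at the vector
`v_j = ψ_j(x) ψ_j(y)`, which is nonzero since `ψ_0` is a positive constant. So it suffices that
`Θ` is a strictly positive definite kernel on distinct positive points (`thetaK_form_pos`). The
reason is a damped oscillator: let `g = 2γ` and let `u_c` be the velocity of the solution of
`f'' + g f' + c f = 0` started at position `0` with velocity `1`. Then
`Θ(c, d) = 2g ∫₀^∞ u_c(t) u_d(t) dt`. The proof below is algebraic and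
replaces the integral by a Lyapunov equation. The Gram matrix `X` of all the phase-space
coordinates has `Θ / (2g)` as its velocity block and solves
`X T + Tᵀ X = -q qᵀ` (`lyapX_equation`), where `T + Tᵀ ≤ 0`. If `X z = l z` with `l ≤ 0`, pairing
this equation with `z` forces `q · z = 0`, and the `l`-eigenspace of `X` is `T`-invariant
(`lyap_step`). By Cayley-Hamilton for each oscillator it is then invariant under multiplication
by `diag(s_j²)`, so that a Vandermonde argument gives `z = 0`. Hence all eigenvalues of `X` are
positive (`lyapX_posDef`).
-/

open Real

noncomputable section

/-- The Neumann eigenvalues shifted by the pinning: `μ_j = ω₀² + 4 sin²(πj/(2(n+1)))`. -/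
def muN (n : ℕ) (ω₀ : ℝ) (j : ℕ) : ℝ :=
  ω₀ ^ 2 + 4 * Real.sin (π * j / (2 * (n + 1))) ^ 2

/-- `Θ(c, c') = [1 + (c − c')²/(8γ²(c + c'))]⁻¹`. -/
def thetaK (γ c c' : ℝ) : ℝ :=
  (1 + (c - c') ^ 2 / (8 * γ ^ 2 * (c + c')))⁻¹

/-- The kernel `M_{x,y} = Σ_{j,j'} Θ(μ_j, μ_{j'}) ψ_j(x) ψ_{j'}(x) ψ_j(y) ψ_{j'}(y)`. -/
def kerM (n : ℕ) (ω₀ γ : ℝ) (x y : ℕ) : ℝ :=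
  ∑ j ∈ Finset.range (n + 1), ∑ j' ∈ Finset.range (n + 1),
    thetaK γ (muN n ω₀ j) (muN n ω₀ j') * psiN n j x * psiN n j' x * psiN n j y * psiN n j' y

/-! ### The Lyapunov equation of a family of damped oscillators -/

/-- The resultant of the characteristic polynomials `x² + g x + c` and `x² - g x + d`, the common
denominator of the entries of `lyapX`. -/
def lyapDen (g c d : ℝ) : ℝ := (c - d) ^ 2 + 2 * g ^ 2 * (c + d)

/-- The Gram matrix of the damped oscillators with friction `g` and frequencies `s j`, started at
position `0` and velocity `1`: `∫₀^∞` of products of their phase-space coordinates, in closed form.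
The index `.inl j` is the position of oscillator `j` multiplied by `s j`, and `.inr j` is its
velocity. -/
def lyapX {m : ℕ} (g : ℝ) (s : Fin m → ℝ) : Matrix (Fin m ⊕ Fin m) (Fin m ⊕ Fin m) ℝ :=
  Matrix.fromBlocks
    (Matrix.of fun j k => s j * s k * (2 * g) / lyapDen g (s j ^ 2) (s k ^ 2))
    (Matrix.of fun j k => s j * (s j ^ 2 - s k ^ 2) / lyapDen g (s j ^ 2) (s k ^ 2))
    (Matrix.of fun j k => s k * (s k ^ 2 - s j ^ 2) / lyapDen g (s j ^ 2) (s k ^ 2))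
    (Matrix.of fun j k => g * (s j ^ 2 + s k ^ 2) / lyapDen g (s j ^ 2) (s k ^ 2))

/-- The transpose of the drift matrix of the oscillators, in the coordinates of `lyapX`. The scaling
of the positions by `s j` makes its symmetric part `-g` times the projection to the velocities. -/
def lyapT {m : ℕ} (g : ℝ) (s : Fin m → ℝ) : Matrix (Fin m ⊕ Fin m) (Fin m ⊕ Fin m) ℝ :=
  Matrix.fromBlocks 0 (-Matrix.diagonal s) (Matrix.diagonal s) (-Matrix.diagonal fun _ => g)

/-- The common initial condition: all positions `0`, all velocities `1`. -/
def lyapQ (m : ℕ) : Fin m ⊕ Fin m → ℝ := Sum.elim 0 1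

lemma lyapDen_comm (g c d : ℝ) : lyapDen g c d = lyapDen g d c := by
  unfold lyapDen; ring

lemma lyapDen_pos {g c d : ℝ} (hg : 0 < g) (hc : 0 < c) (hd : 0 < d) : 0 < lyapDen g c d := by
  unfold lyapDen; positivity

lemma lyapX_isHermitian {m : ℕ} (g : ℝ) (s : Fin m → ℝ) : (lyapX g s).IsHermitian := by
  ext i j
  rcases i with i | i <;> rcases j with j | j <;>
    simp only [lyapX, Matrix.conjTranspose_apply, Matrix.fromBlocks_apply₁₁,
      Matrix.fromBlocks_apply₁₂, Matrix.fromBlocks_apply₂₁, Matrix.fromBlocks_apply₂₂,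
      Matrix.of_apply, star_trivial] <;>
    rw [lyapDen_comm] <;> ring

lemma lyapX_equation {m : ℕ} {g : ℝ} (hg : 0 < g) {s : Fin m → ℝ} (hs : ∀ j, 0 < s j) :
    lyapX g s * lyapT g s + (lyapT g s).transpose * lyapX g s
      = -Matrix.vecMulVec (lyapQ m) (lyapQ m) := by
  ext i j
  rcases i with i | i <;> rcases j with j | j
  all_goals
    have h := lyapDen_pos hg (pow_pos (hs i) 2) (pow_pos (hs j) 2)
    simp only [lyapX, lyapT, lyapQ, Matrix.fromBlocks_transpose, Matrix.fromBlocks_multiply,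
      Matrix.fromBlocks_apply₁₁, Matrix.fromBlocks_apply₁₂, Matrix.fromBlocks_apply₂₁,
      Matrix.fromBlocks_apply₂₂, Matrix.of_apply, Matrix.transpose_neg, Matrix.diagonal_transpose, Matrix.mul_neg,
      Matrix.neg_mul, Matrix.mul_zero, Matrix.zero_mul, Matrix.transpose_zero, Matrix.add_apply,
      Matrix.neg_apply, Matrix.mul_diagonal, Matrix.diagonal_mul, Matrix.vecMulVec_apply,
      Matrix.zero_apply, Sum.elim_inl, Sum.elim_inr, Pi.zero_apply, Pi.one_apply]
    field_simp
    unfold lyapDen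
    ring

lemma lyapT_mulVec {m : ℕ} (g : ℝ) (s : Fin m → ℝ) (z : Fin m ⊕ Fin m → ℝ) :
    (lyapT g s).mulVec z = Sum.elim (fun j => -(s j * z (.inr j)))
      (fun j => s j * z (.inl j) - g * z (.inr j)) := by
  funext i
  rcases i with i | i <;>
    simp [lyapT, Matrix.fromBlocks_mulVec, Matrix.mulVec_diagonal,
      Function.comp_def, sub_eq_add_neg]

lemma lyapT_transpose_mulVec {m : ℕ} (g : ℝ) (s : Fin m → ℝ) (z : Fin m ⊕ Fin m → ℝ) :
    (lyapT g s).transpose.mulVec z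
      = -(lyapT g s).mulVec z - (2 * g) • (Sum.elim 0 fun j => z (.inr j) : Fin m ⊕ Fin m → ℝ) := by
  rw [lyapT_mulVec]
  funext i
  rcases i with i | i <;>
    simp [lyapT, Matrix.fromBlocks_transpose, Matrix.fromBlocks_mulVec, Matrix.mulVec_diagonal,
      Function.comp_def]
  ring

/-- For `l ≤ 0` the `l`-eigenspace of `lyapX` is orthogonal to `lyapQ` and invariant under `lyapT`. -/
lemma lyap_step {m : ℕ} {g : ℝ} (hg : 0 < g) {s : Fin m → ℝ} (hs : ∀ j, 0 < s j) {l : ℝ}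
    (hl : l ≤ 0) {z : Fin m ⊕ Fin m → ℝ} (hz : (lyapX g s).mulVec z = l • z) :
    ∑ j, z (.inr j) = 0 ∧ (lyapX g s).mulVec ((lyapT g s).mulVec z) = l • (lyapT g s).mulVec z := by
  set X := lyapX g s with hX
  set w := (lyapT g s).mulVec z with hw
  set σ := ∑ j, z (.inr j) with hσ
  set b : Fin m ⊕ Fin m → ℝ := Sum.elim 0 (fun j => z (.inr j)) with hb
  have hq : lyapQ m ⬝ᵥ z = σ := by simp [lyapQ, dotProduct, hσ]
  have hzq : z ⬝ᵥ lyapQ m = σ := by rw [dotProduct_comm, hq]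
  have hzb : z ⬝ᵥ b = ∑ j, z (.inr j) ^ 2 := by simp [dotProduct, hb, sq]
  have key : X.mulVec w = l • w + (2 * g * l) • b - σ • lyapQ m := by
    have h := congrArg (fun M => M.mulVec z) (lyapX_equation hg hs)
    simp only [Matrix.add_mulVec, ← Matrix.mulVec_mulVec, Matrix.neg_mulVec,
      Matrix.vecMulVec_mulVec, hq] at h
    rw [← hX, hz, Matrix.mulVec_smul, lyapT_transpose_mulVec, ← hw, ← hb] at h
    rw [eq_sub_of_add_eq h]
    funext i
    simp
    ring
  have hsym : z ⬝ᵥ X.mulVec w = l * (z ⬝ᵥ w) := by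
    have ht : X.transpose = X := by
      have := lyapX_isHermitian g s
      rwa [Matrix.IsHermitian, Matrix.conjTranspose_eq_transpose_of_trivial] at this
    rw [Matrix.dotProduct_mulVec, ← Matrix.mulVec_transpose, ht, hz, smul_dotProduct, smul_eq_mul]
  -- Pairing `key` with `z` leaves `2 g l ‖b‖² = σ²`, whose sides have opposite signs.
  rw [key, dotProduct_sub, dotProduct_add, dotProduct_smul, dotProduct_smul, dotProduct_smul,
    hzq, hzb] at hsym
  simp only [smul_eq_mul] at hsym
  have hS : 0 ≤ ∑ j, z (.inr j) ^ 2 := Finset.sum_nonneg fun _ _ => sq_nonneg _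
  have h1 : 2 * g * l * ∑ j, z (.inr j) ^ 2 ≤ 0 :=
    mul_nonpos_of_nonpos_of_nonneg (by nlinarith) hS
  have hσ0 : σ = 0 := by nlinarith [mul_self_nonneg σ]
  refine ⟨hσ0, ?_⟩
  have hlb : (2 * g * l) • b = 0 := by
    have h2 : 2 * g * l * ∑ j, z (.inr j) ^ 2 = 0 := by rw [hσ0] at hsym; linarith
    rcases mul_eq_zero.1 h2 with h3 | h3
    · rw [h3, zero_smul]
    · have h4 : b = 0 := by
        funext i
        rcases i with i | i
        · rfl
        · have := (Finset.sum_eq_zero_iff_of_nonneg fun _ _ => sq_nonneg _).1 h3 i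
            (Finset.mem_univ i)
          simpa [hb] using this
      rw [h4, smul_zero]
  rw [key, hlb, hσ0]
  simp

lemma lyapX_posDef {m : ℕ} {g : ℝ} (hg : 0 < g) {s : Fin m → ℝ} (hs : ∀ j, 0 < s j)
    (hinj : Function.Injective s) : (lyapX g s).PosDef := by
  rw [(lyapX_isHermitian g s).posDef_iff_eigenvalues_pos]
  intro i
  by_contra! hl
  set l := (lyapX_isHermitian g s).eigenvalues i
  -- The velocity coordinates of every eigenvector vanish, since `∑ j, s_j^(2k) z_j = 0` for all `k`.
  have hker : ∀ z, (lyapX g s).mulVec z = l • z → ∀ j, z (.inr j) = 0 := by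
    intro z hz
    have hpow : ∀ k : ℕ, (lyapX g s).mulVec
        (fun i => z i * ((Sum.elim s s i) ^ 2) ^ k)
          = l • (fun i => z i * ((Sum.elim s s i) ^ 2) ^ k) := by
      intro k
      induction k with
      | zero => simpa using hz
      | succ k ih =>
        set u : Fin m ⊕ Fin m → ℝ := fun i => z i * ((Sum.elim s s i) ^ 2) ^ k with hu
        have e1 := (lyap_step hg hs hl ih).2
        have e2 := (lyap_step hg hs hl e1).2
        -- Cayley-Hamilton for each oscillator: `T² + g T = -diag(s²)`.
        have ch : (fun i => z i * ((Sum.elim s s i) ^ 2) ^ (k + 1))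
            = -((lyapT g s).mulVec ((lyapT g s).mulVec u) + g • (lyapT g s).mulVec u) := by
          rw [lyapT_mulVec, lyapT_mulVec]
          funext i
          rcases i with i | i <;> simp [hu] <;> ring
        rw [ch, Matrix.mulVec_neg, Matrix.mulVec_add, Matrix.mulVec_smul, e1, e2]
        simp only [smul_neg, smul_add, smul_comm g l]
    have hsq : Function.Injective fun j => s j ^ 2 := fun a b hab =>
      hinj ((pow_left_inj₀ (hs a).le (hs b).le two_ne_zero).1 hab)
    have := Matrix.eq_zero_of_forall_pow_sum_mul_pow_eq_zero (v := fun j => z (.inr j)) hsq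
      (fun k => by simpa using (lyap_step hg hs hl (hpow k)).1)
    exact fun j => congrFun this j
  set z : Fin m ⊕ Fin m → ℝ := ⇑((lyapX_isHermitian g s).eigenvectorBasis i) with hzdef
  have hz : (lyapX g s).mulVec z = l • z := (lyapX_isHermitian g s).mulVec_eigenvectorBasis i
  have hb := hker z hz
  -- The velocity coordinates of `T z`, again in the eigenspace, are now `s_j` times the positions.
  have ha : ∀ j, z (.inl j) = 0 := by
    intro j
    have h := hker _ (lyap_step hg hs hl hz).2 j
    rw [lyapT_mulVec] at h
    simpa [hb j, (hs j).ne'] using h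
  refine (lyapX_isHermitian g s).eigenvectorBasis.toBasis.ne_zero i ?_
  rw [OrthonormalBasis.coe_toBasis]
  ext j
  rcases j with j | j
  · exact ha j
  · exact hb j

/-! ### Strict positive definiteness of the kernel `Θ` -/

/-- The form is `4γ` times that of `lyapX` with `g = 2γ`, restricted to the velocities. -/
lemma thetaK_form_pos {m : ℕ} {γ : ℝ} (hγ : 0 < γ) {c : Fin m → ℝ} (hc : ∀ j, 0 < c j)
    (hinj : Function.Injective c) {v : Fin m → ℝ} (hv : v ≠ 0) :
    0 < ∑ j, ∑ k, thetaK γ (c j) (c k) * v j * v k := by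
  have hs : ∀ j, 0 < √(c j) := fun j => Real.sqrt_pos.2 (hc j)
  have hsq : ∀ j, √(c j) ^ 2 = c j := fun j => Real.sq_sqrt (hc j).le
  have hX := lyapX_posDef (g := 2 * γ) (by positivity) hs fun a b hab => hinj (by
    rw [← hsq a, ← hsq b]
    exact congrArg (· ^ 2) hab)
  have hne : (Sum.elim 0 v : Fin m ⊕ Fin m → ℝ) ≠ 0 := by
    intro h
    exact hv (funext fun j => congrFun h (.inr j))
  have hpos := hX.dotProduct_mulVec_pos hne
  have heq : ∑ j, ∑ k, thetaK γ (c j) (c k) * v j * v k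
      = 4 * γ * (star (Sum.elim 0 v : Fin m ⊕ Fin m → ℝ) ⬝ᵥ
          (lyapX (2 * γ) fun j => √(c j)).mulVec (Sum.elim 0 v)) := by
    simp only [dotProduct, Matrix.mulVec, lyapX, Fintype.sum_sum_type, Pi.star_apply, star_trivial,
      Sum.elim_inl, Sum.elim_inr, Pi.zero_apply, zero_mul, mul_zero, Finset.sum_const_zero,
      zero_add, Matrix.fromBlocks_apply₂₂, Matrix.of_apply, hsq, Finset.mul_sum]
    refine Finset.sum_congr rfl fun j _ => Finset.sum_congr rfl fun k _ => ?_
    have h1 := hc j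
    have h2 := hc k
    have h3 := lyapDen_pos (g := 2 * γ) (by positivity) h1 h2
    have h4 : thetaK γ (c j) (c k) = 8 * γ ^ 2 * (c j + c k) / lyapDen (2 * γ) (c j) (c k) := by
      have h5 : lyapDen (2 * γ) (c j) (c k) = 8 * γ ^ 2 * (c j + c k) + (c j - c k) ^ 2 := by
        unfold lyapDen; ring
      rw [thetaK, h5, one_add_div (by positivity), inv_div]
    rw [h4]
    field_simp
    ring
  rw [heq]
  positivity

/-! ### Neumann eigenvalues and eigenvectors -/

lemma sum_cos_eq_zero (N : ℕ) (k : ℤ) (hsin : Real.sin (π * k / (2 * N)) ≠ 0) :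
    ∑ y ∈ Finset.range N, Real.cos (π * k * (2 * y + 1) / (2 * N)) = 0 := by
  rcases Nat.eq_zero_or_pos N with rfl | hN
  · simp
  have hN' : (N : ℝ) ≠ 0 := by positivity
  -- Multiplied by `2 sin(πk/(2N))` the sum telescopes, and `sin(πk) = 0`.
  have htel : ∀ M : ℕ, 2 * Real.sin (π * k / (2 * N)) *
      ∑ y ∈ Finset.range M, Real.cos (π * k * (2 * y + 1) / (2 * N))
        = Real.sin (π * k * M / N) := by
    intro M
    induction M with
    | zero => simp
    | succ M ih =>
      rw [Finset.sum_range_succ, mul_add, ih]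
      have e1 : π * k * M / N = π * k * (2 * M + 1) / (2 * N) - π * k / (2 * N) := by
        field_simp; ring
      have e2 : π * k * (M + 1 : ℕ) / N = π * k * (2 * M + 1) / (2 * N) + π * k / (2 * N) := by
        push_cast; field_simp; ring
      rw [e1, e2, Real.sin_sub, Real.sin_add]
      ring
  have h := htel N
  have hπ : Real.sin (π * k * N / N) = 0 := by
    rw [mul_div_cancel_right₀ _ hN', mul_comm, Real.sin_int_mul_pi]
  rw [hπ] at h
  exact (mul_eq_zero.1 h).resolve_left (mul_ne_zero two_ne_zero hsin)

lemma sin_ne_zero_of_abs_lt {N : ℕ} {k : ℤ} (hk : k ≠ 0) (hlt : |k| < 2 * N) :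
    Real.sin (π * k / (2 * N)) ≠ 0 := by
  have hN : (0 : ℝ) < 2 * N := by
    have : (0 : ℤ) < 2 * N := lt_of_le_of_lt (abs_nonneg k) hlt
    exact_mod_cast this
  have hk' : |(k : ℝ)| < 2 * N := by exact_mod_cast hlt
  rw [abs_lt] at hk'
  have hπ := Real.pi_pos
  have hne : π * k / (2 * N) ≠ 0 := by
    have : (k : ℝ) ≠ 0 := by exact_mod_cast hk
    positivity
  rw [Ne, Real.sin_eq_zero_iff_of_lt_of_lt]
  · exact hne
  · rw [lt_div_iff₀ hN]; nlinarith
  · rw [div_lt_iff₀ hN]; nlinarith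

lemma psiN_orthonormal (n j k : ℕ) (hj : j < n + 1) (hk : k < n + 1) :
    ∑ y ∈ Finset.range (n + 1), psiN n j y * psiN n k y = if j = k then 1 else 0 := by
  have hprod : ∀ y : ℕ, psiN n j y * psiN n k y =
      Real.sqrt ((2 - if j = 0 then 1 else 0) / (n + 1)) *
      Real.sqrt ((2 - if k = 0 then 1 else 0) / (n + 1)) / 2 *
        (Real.cos (π * ((j : ℤ) - k : ℤ) * (2 * y + 1) / (2 * (n + 1 : ℕ))) +
         Real.cos (π * ((j : ℤ) + k : ℤ) * (2 * y + 1) / (2 * (n + 1 : ℕ)))) := by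
    intro y
    have e1 : π * ((j : ℤ) - k : ℤ) * (2 * y + 1) / (2 * (n + 1 : ℕ))
        = π * j * (2 * y + 1) / (2 * (n + 1)) - π * k * (2 * y + 1) / (2 * (n + 1)) := by
      push_cast; ring
    have e2 : π * ((j : ℤ) + k : ℤ) * (2 * y + 1) / (2 * (n + 1 : ℕ))
        = π * j * (2 * y + 1) / (2 * (n + 1)) + π * k * (2 * y + 1) / (2 * (n + 1)) := by
      push_cast; ring
    rw [e1, e2, Real.cos_sub, Real.cos_add, psiN, psiN]
    ring
  rw [Finset.sum_congr rfl fun y _ => hprod y, ← Finset.mul_sum, Finset.sum_add_distrib]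
  have hzero : ∀ i : ℤ, i ≠ 0 → |i| < 2 * (n + 1 : ℕ) →
      ∑ y ∈ Finset.range (n + 1), Real.cos (π * i * (2 * y + 1) / (2 * (n + 1 : ℕ))) = 0 :=
    fun i h1 h2 => sum_cos_eq_zero _ i (sin_ne_zero_of_abs_lt h1 h2)
  have hn : (0 : ℝ) < n + 1 := by positivity
  by_cases hjk : j = k
  · subst hjk
    rw [if_pos rfl, Real.mul_self_sqrt (by split_ifs <;> norm_num <;> positivity)]
    by_cases h0 : j = 0
    · subst h0
      simp
      field_simp
      norm_num
    · rw [hzero (j + j) (by omega) (by rw [abs_lt]; omega)]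
      simp [h0]
      field_simp
  · rw [if_neg hjk, hzero (j - k) (by omega) (by rw [abs_lt]; omega),
      hzero (j + k) (by omega) (by rw [abs_lt]; omega)]
    simp

/-- A square matrix with orthonormal rows has orthonormal columns. -/
lemma psiN_complete (n x : ℕ) (hx : x < n + 1) :
    ∑ j ∈ Finset.range (n + 1), psiN n j x * psiN n j x = 1 := by
  set Ψ : Matrix (Fin (n + 1)) (Fin (n + 1)) ℝ := Matrix.of fun j y => psiN n j y with hΨ
  have h1 : Ψ * Ψ.transpose = 1 := by
    ext j k
    rw [Matrix.mul_apply, Matrix.one_apply]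
    simp only [hΨ, Matrix.transpose_apply, Matrix.of_apply]
    rw [Fin.sum_univ_eq_sum_range fun y => psiN n j y * psiN n k y,
      psiN_orthonormal n j k j.2 k.2]
    simp [Fin.ext_iff]
  have h2 : (Ψ.transpose * Ψ) ⟨x, hx⟩ ⟨x, hx⟩ =
      (1 : Matrix (Fin (n + 1)) (Fin (n + 1)) ℝ) ⟨x, hx⟩ ⟨x, hx⟩ := by
    rw [mul_eq_one_comm.1 h1]
  rw [Matrix.mul_apply, Matrix.one_apply_eq] at h2
  simpa only [hΨ, Matrix.transpose_apply, Matrix.of_apply,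
    Fin.sum_univ_eq_sum_range fun j => psiN n j x * psiN n j x] using h2

lemma muN_pos (n : ℕ) {ω₀ : ℝ} (hω : 0 < ω₀) (j : ℕ) : 0 < muN n ω₀ j := by
  unfold muN; positivity

lemma muN_injective (n : ℕ) (ω₀ : ℝ) :
    Function.Injective fun j : Fin (n + 1) => muN n ω₀ j := by
  have hn : (0 : ℝ) < n + 1 := by positivity
  have hπ := Real.pi_pos
  have hrange : ∀ j : Fin (n + 1), 0 ≤ π * j / (2 * (n + 1)) ∧ π * j / (2 * (n + 1)) ≤ π / 2 := by
    intro j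
    have hj : (j : ℝ) ≤ n + 1 := by exact_mod_cast j.2.le
    refine ⟨by positivity, ?_⟩
    rw [div_le_div_iff₀ (by positivity) two_pos]
    nlinarith
  intro j k h
  have hs : ∀ j : Fin (n + 1), 0 ≤ Real.sin (π * j / (2 * (n + 1))) := fun j =>
    Real.sin_nonneg_of_nonneg_of_le_pi (hrange j).1 (by linarith [(hrange j).2])
  have h1 : Real.sin (π * j / (2 * (n + 1))) = Real.sin (π * k / (2 * (n + 1))) := by
    refine (pow_left_inj₀ (hs j) (hs k) two_ne_zero).1 ?_
    simp only [muN] at h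
    linarith
  have h2 := Real.injOn_sin ⟨by linarith [(hrange j).1], (hrange j).2⟩
    ⟨by linarith [(hrange k).1], (hrange k).2⟩ h1
  field_simp at h2
  exact Fin.ext (by exact_mod_cast h2)

lemma psiN_zero_pos (n x : ℕ) : 0 < psiN n 0 x := by
  have : (0 : ℝ) < (2 - 1) / (n + 1) := by norm_num; positivity
  simpa [psiN] using this

/-- The matrix `[M_{x,y}]` is symmetric, doubly stochastic, and all of its
entries are strictly positive. -/
theorem kerM_symmetric_bistochastic_positive (n : ℕ) (hn : 1 ≤ n) (ω₀ γ : ℝ)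
    (hω : 0 < ω₀) (hγ : 0 < γ) :
    (∀ x ∈ Finset.range (n + 1), ∀ y ∈ Finset.range (n + 1),
        kerM n ω₀ γ x y = kerM n ω₀ γ y x)
    ∧ (∀ x ∈ Finset.range (n + 1), ∑ y ∈ Finset.range (n + 1), kerM n ω₀ γ x y = 1)
    ∧ (∀ x ∈ Finset.range (n + 1), ∀ y ∈ Finset.range (n + 1), 0 < kerM n ω₀ γ x y) := by
  refine ⟨fun x _ y _ => ?_, fun x hx => ?_, fun x _ y _ => ?_⟩
  · unfold kerM
    exact Finset.sum_congr rfl fun j _ => Finset.sum_congr rfl fun k _ => by ring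
  · have hx' := Finset.mem_range.1 hx
    unfold kerM
    rw [Finset.sum_comm, ← psiN_complete n x hx']
    refine Finset.sum_congr rfl fun j hj => ?_
    rw [Finset.sum_comm]
    have hk : ∀ k ∈ Finset.range (n + 1), ∑ y ∈ Finset.range (n + 1),
        thetaK γ (muN n ω₀ j) (muN n ω₀ k) * psiN n j x * psiN n k x * psiN n j y * psiN n k y
          = if j = k then psiN n j x * psiN n j x else 0 := by
      intro k hk
      simp only [mul_assoc _ (psiN n j _) (psiN n k _)]
      rw [← Finset.mul_sum, psiN_orthonormal n j k (Finset.mem_range.1 hj) (Finset.mem_range.1 hk)]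
      split_ifs with h
      · subst h
        simp [thetaK]
      · simp
    rw [Finset.sum_congr rfl hk, Finset.sum_ite_eq, if_pos hj]
  · have hv : (fun j : Fin (n + 1) => psiN n j x * psiN n j y) ≠ 0 := fun h =>
      (mul_pos (psiN_zero_pos n x) (psiN_zero_pos n y)).ne' (congrFun h 0)
    have h := thetaK_form_pos hγ (fun j : Fin (n + 1) => muN_pos n hω j) (muN_injective n ω₀) hv
    unfold kerM
    rw [← Fin.sum_univ_eq_sum_range fun j => ∑ k ∈ Finset.range (n + 1),
      thetaK γ (muN n ω₀ j) (muN n ω₀ k) * psiN n j x * psiN n k x * psiN n j y * psiN n k y]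
    refine h.trans_eq (Finset.sum_congr rfl fun j _ => ?_)
    rw [← Fin.sum_univ_eq_sum_range fun k =>
      thetaK γ (muN n ω₀ j) (muN n ω₀ k) * psiN n j x * psiN n k x * psiN n j y * psiN n k y]
    exact Finset.sum_congr rfl fun k _ => by ring


end
end
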